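/- arXiv:2402.02538 — 2 statements merged into one kernel-verified Lean document; each statement's English description precedes it below -/
import Mathlib

section
/- For every integer n ≥ 4 and every i ∈ [n], |VPF_{n,[i]}| = ((i−1)(i−2)/2)·|VPF_{n-3}| + Σ_{ℓ=1}^{i-1} |VPF_{n-1,[ℓ]}| + (i−1)·Σ_{ℓ=1}^{i-2} |VPF_{n-2,ℓ}| + Σ_{ℓ=1}^{i-3} (ℓ(ℓ+1)/2)·|VPF_{n-3,(ℓ)}| + ((i−2)(i−1)/2)·Σ_{ℓ=i-2}^{n-3} |VPF_{n-3,(ℓ)}|. -/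
/-- One car with (1-indexed) preference `p` attempts to park on a one-way street with
spots `1,…,n` under the `k`-vacillating rule, given the set `occ` of occupied spots:
it parks in spot `p` if unoccupied; otherwise in spot `p - k` if `p - k ≥ 1` and it is
unoccupied; otherwise in spot `p + k` if `p + k ≤ n` and it is unoccupied; otherwise it
fails to park (`none`). -/
def parkStep (n k : ℕ) (occ : Finset ℕ) (p : ℕ) : Option ℕ :=
  if p ∉ occ then some p
  else if k < p ∧ p - k ∉ occ then some (p - k)
  else if p + k ≤ n ∧ p + k ∉ occ then some (p + k)
  else none

/-- Park the cars whose preference list is given, in order, under the `k`-vacillating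
rule on a street with spots `1,…,n`, starting from occupied set `occ`.  Returns the list
of spots occupied by the cars (in the order the cars arrive), or `none` if some car
fails to park. -/
def parkAssign (n k : ℕ) (occ : Finset ℕ) : List ℕ → Option (List ℕ)
  | [] => some []
  | p :: ps =>
    match parkStep n k occ p with
    | none => none
    | some s => (parkAssign n k (insert s occ) ps).map (s :: ·)

/-- The 1-indexed preference list in `[n]^m` associated to `α : Fin m → Fin n`
(car `i+1` prefers spot `α i + 1`). -/
def prefList {m n : ℕ} (α : Fin m → Fin n) : List ℕ :=
  List.ofFn fun i => (α i : ℕ) + 1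

/-- The set of `k`-vacillating parking functions of length `n`:
preference lists in `[n]^n` (encoded as `Fin n → Fin n`) for which all `n` cars park. -/
def VPFk (n k : ℕ) : Finset (Fin n → Fin n) :=
  Finset.univ.filter fun α => (parkAssign n k ∅ (prefList α)).isSome

/-- The set of vacillating parking functions of length `n` (the case `k = 1`). -/
def VPF (n : ℕ) : Finset (Fin n → Fin n) := VPFk n 1

/-- The (1-indexed) spot occupied by the (1-indexed) car `i` when the cars with
preference list `α` park under the vacillating (`k = 1`) rule. -/
def spotOfCar (n : ℕ) (α : Fin n → Fin n) (i : ℕ) : Option ℕ :=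
  (parkAssign n 1 ∅ (prefList α)).bind fun l => l[i-1]?

/-- The (1-indexed) preferred spot of the (1-indexed) car `i`. -/
def prefOfCar (n : ℕ) (α : Fin n → Fin n) (i : ℕ) : Option ℕ :=
  (prefList α)[i-1]?

/-- `VPF_{n,i}`: vacillating parking functions of length `n` in which spot `n` is
occupied by car `i`. -/
def VPF_i (n i : ℕ) : Finset (Fin n → Fin n) :=
  (VPF n).filter fun α => spotOfCar n α i = some n

/-- `VPF_{n,(i)}`: vacillating parking functions of length `n` in which car `i`
prefers spot `n` and parks in spot `n`. -/
def VPF_paren (n i : ℕ) : Finset (Fin n → Fin n) :=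
  (VPF n).filter fun α => prefOfCar n α i = some n ∧ spotOfCar n α i = some n

/-- `VPF_{n,[i]}`: vacillating parking functions of length `n` in which car `i`
prefers spot `n - 1` and parks in spot `n`. -/
def VPF_bracket (n i : ℕ) : Finset (Fin n → Fin n) :=
  (VPF n).filter fun α => prefOfCar n α i = some (n-1) ∧ spotOfCar n α i = some n

section Parking

variable {n k m p s : ℕ} {occ : Finset ℕ} {A B S σ : List ℕ}

theorem parkAssign_cons_eq_some :
    parkAssign n k occ (p :: B) = some σ ↔
      ∃ s T, σ = s :: T ∧ parkStep n k occ p = some s ∧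
        parkAssign n k (insert s occ) B = some T := by
  rw [parkAssign]
  cases h : parkStep n k occ p with
  | none => simp
  | some s =>
    simp only [Option.map_eq_some_iff]
    constructor
    · rintro ⟨T, hT, rfl⟩
      exact ⟨s, T, rfl, rfl, hT⟩
    · rintro ⟨s', T, rfl, hs, hT⟩
      cases hs
      exact ⟨T, hT, rfl⟩

theorem parkAssign_append_eq_some :
    parkAssign n k occ (A ++ B) = some σ ↔
      ∃ S T, σ = S ++ T ∧ parkAssign n k occ A = some S ∧
        parkAssign n k (occ ∪ S.toFinset) B = some T := by
  induction A generalizing occ σ with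
  | nil => simp [parkAssign]
  | cons p A ih =>
    simp only [List.cons_append, parkAssign_cons_eq_some, ih]
    constructor
    · rintro ⟨s, _, rfl, hs, S, T, rfl, hS, hT⟩
      refine ⟨s :: S, T, rfl, ⟨s, S, rfl, hs, hS⟩, ?_⟩
      rwa [List.toFinset_cons, Finset.union_insert, ← Finset.insert_union]
    · rintro ⟨_, T, rfl, ⟨s, S, rfl, hs, hS⟩, hT⟩
      refine ⟨s, S ++ T, rfl, hs, S, T, rfl, hS, ?_⟩
      rwa [List.toFinset_cons, Finset.union_insert, ← Finset.insert_union] at hT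

/-- Splitting a parking process at a given car. -/
theorem parkAssign_append_cons_eq_some :
    parkAssign n k occ (A ++ p :: B) = some σ ↔
      ∃ S s T, σ = S ++ s :: T ∧ parkAssign n k occ A = some S ∧
        parkStep n k (occ ∪ S.toFinset) p = some s ∧
        parkAssign n k (insert s (occ ∪ S.toFinset)) B = some T := by
  simp only [parkAssign_append_eq_some, parkAssign_cons_eq_some]
  grind

theorem length_of_parkAssign (h : parkAssign n k occ A = some S) : S.length = A.length := by
  induction A generalizing occ S with
  | nil => simp_all [parkAssign]
  | cons p A ih =>
    obtain ⟨s, T, rfl, -, hT⟩ := parkAssign_cons_eq_some.1 h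
    simp [ih hT]

theorem parkStep_eq_some (h : parkStep n k occ p = some s) :
    s ∉ occ ∧ (s = p ∨ (k < p ∧ s = p - k) ∨
      (s = p + k ∧ p + k ≤ n ∧ p ∈ occ ∧ (k < p → p - k ∈ occ))) := by
  unfold parkStep at h
  grind

theorem mem_range_of_parkAssign (hA : ∀ x ∈ A, 1 ≤ x ∧ x ≤ n)
    (h : parkAssign n k occ A = some S) : ∀ x ∈ S, 1 ≤ x ∧ x ≤ n := by
  induction A generalizing occ S with
  | nil => simp_all [parkAssign]
  | cons p A ih =>
    obtain ⟨s, T, rfl, hs, hT⟩ := parkAssign_cons_eq_some.1 h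
    have := ih (fun x hx => hA x (List.mem_cons_of_mem _ hx)) hT
    have := parkStep_eq_some hs
    have := hA p List.mem_cons_self
    grind

theorem nodup_of_parkAssign (h : parkAssign n k occ A = some S) :
    S.Nodup ∧ ∀ x ∈ S, x ∉ occ := by
  induction A generalizing occ S with
  | nil => simp_all [parkAssign]
  | cons p A ih =>
    obtain ⟨s, T, rfl, hs, hT⟩ := parkAssign_cons_eq_some.1 h
    have := ih hT
    have := parkStep_eq_some hs
    grind

/-- If `n` cars park on an empty street with `n` spots, then every spot is taken. -/
theorem mem_of_parkAssign_empty (hA : ∀ x ∈ A, 1 ≤ x ∧ x ≤ n) (hl : A.length = n)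
    (h : parkAssign n k ∅ A = some S) (h1 : 1 ≤ s) (hs : s ≤ n) : s ∈ S := by
  have hsub : S.toFinset ⊆ Finset.Icc 1 n := fun x hx =>
    Finset.mem_Icc.2 (mem_range_of_parkAssign hA h x (List.mem_toFinset.1 hx))
  have hcard : S.toFinset.card = n := by
    rw [List.toFinset_card_of_nodup (nodup_of_parkAssign h).1, length_of_parkAssign h, hl]
  have := Finset.eq_of_subset_of_card_le hsub (by simp [hcard])
  rw [← List.mem_toFinset, this]
  exact Finset.mem_Icc.2 ⟨h1, hs⟩

/-- As long as the last spot of the street stays free, it may be removed. -/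
theorem parkAssign_succ_of_notMem (hA : ∀ x ∈ A, x ≤ m + 1) (hocc : m + 1 ∉ occ) :
    parkAssign (m + 1) 1 occ A = some S ∧ m + 1 ∉ S ↔
      (∀ x ∈ A, x ≤ m) ∧ parkAssign m 1 occ A = some S := by
  induction A generalizing occ S with
  | nil =>
    simp only [parkAssign]
    grind
  | cons p A ih =>
    have hA' : ∀ x ∈ A, x ≤ m + 1 := fun x hx => hA x (List.mem_cons_of_mem _ hx)
    have hp := hA p List.mem_cons_self
    have hstep : ∀ s, parkStep (m + 1) 1 occ p = some s ∧ s ≠ m + 1 ↔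
        p ≤ m ∧ parkStep m 1 occ p = some s := by
      intro s
      unfold parkStep
      grind
    simp only [parkAssign_cons_eq_some]
    constructor
    · rintro ⟨⟨s, T, rfl, hs, hT⟩, hm⟩
      have hsm : s ≠ m + 1 := by grind
      have h1 := (hstep s).1 ⟨hs, hsm⟩
      have h2 := (ih hA' (occ := insert s occ) (by grind)).1 ⟨hT, by grind⟩
      exact ⟨by grind, s, T, rfl, h1.2, h2.2⟩
    · rintro ⟨hle, s, T, rfl, hs, hT⟩
      have h1 := (hstep s).2 ⟨hle p List.mem_cons_self, hs⟩
      have h2 := (ih hA' (occ := insert s occ) (by grind)).2 ⟨by grind, hT⟩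
      exact ⟨⟨s, T, rfl, h1.1, h2.1⟩, by grind⟩

/-- Once the last spot of the street is taken, cars not preferring it ignore it. -/
theorem parkAssign_succ_insert (hA : ∀ x ∈ A, x ≤ m) :
    parkAssign (m + 1) 1 (insert (m + 1) occ) A = parkAssign m 1 occ A := by
  induction A generalizing occ with
  | nil => rfl
  | cons p A ih =>
    have hp := hA p List.mem_cons_self
    have hstep : parkStep (m + 1) 1 (insert (m + 1) occ) p = parkStep m 1 occ p := by
      unfold parkStep
      grind
    simp only [parkAssign, hstep]
    cases parkStep m 1 occ p with
    | none => rfl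
    | some s =>
      simp only [Finset.insert_comm s (m + 1)]
      rw [ih fun x hx => hA x (List.mem_cons_of_mem _ hx)]

theorem parkStep_last_eq_some (hm : 1 ≤ m) (hocc : m + 1 ∈ occ) :
    parkStep (m + 1) 1 occ (m + 1) = some s ↔ m ∉ occ ∧ s = m := by
  unfold parkStep
  grind

/-- No car can prefer the last spot once the last two spots are taken. -/
theorem notMem_of_parkAssign (hm : m ∈ occ) (hm' : m + 1 ∈ occ)
    (h : parkAssign (m + 1) 1 occ A = some S) : m + 1 ∉ A := by
  induction A generalizing occ S with
  | nil => simp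
  | cons p A ih =>
    obtain ⟨s, T, rfl, hs, hT⟩ := parkAssign_cons_eq_some.1 h
    have := ih (by grind) (by grind) hT
    unfold parkStep at hs
    grind

end Parking

section Lists

variable {α : Type*} {l A B S T : List α} {x y : α} {i j t : ℕ}

theorem List.getElem?_eq_some_iff_append :
    l[i]? = some x ↔ ∃ A B, A.length = i ∧ l = A ++ x :: B := by
  constructor
  · intro h
    obtain ⟨hi, rfl⟩ := List.getElem?_eq_some_iff.1 h
    exact ⟨l.take i, l.drop (i + 1), by simp; omega, by simp⟩
  · rintro ⟨A, B, rfl, rfl⟩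
    simp

theorem List.insertIdx_length_append : (A ++ B).insertIdx A.length x = A ++ x :: B := by
  induction A <;> simp_all

theorem List.set_length_append : (A ++ y :: B).set A.length x = A ++ x :: B := by
  induction A <;> simp_all

theorem List.mem_take_iff_getElem? : x ∈ l.take t ↔ ∃ c < t, l[c]? = some x := by
  rw [List.mem_iff_getElem?]
  simp only [List.getElem?_take]
  grind

theorem List.mem_take_succ_append_cons (h : S.length ≤ t) (hxy : x ≠ y) :
    x ∈ (S ++ y :: T).take (t + 1) ↔ x ∈ (S ++ T).take t := by
  obtain ⟨d, rfl⟩ := Nat.exists_eq_add_of_le h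
  rw [add_assoc, List.take_length_add_append, List.take_length_add_append]
  simp [hxy]

end Lists

section Counting

open Classical in
/-- The preference lists in `[m]^m` for which all cars park, with the list `σ` of spots they
occupy satisfying `Q`. -/
noncomputable def parkers (m : ℕ) (Q : List ℕ → List ℕ → Prop) : Finset (List ℕ) :=
  ((Finset.univ : Finset (Fin m → Fin m)).image prefList).filter fun l =>
    ∃ σ, parkAssign m 1 ∅ l = some σ ∧ Q l σ

theorem prefList_injective {m n : ℕ} :
    Function.Injective (prefList : (Fin m → Fin n) → List ℕ) := by
  intro α β h
  funext i
  have := congrFun (List.ofFn_injective h) i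
  exact Fin.ext (by simpa using this)

variable {m : ℕ} {l σ : List ℕ} {Q Q' : List ℕ → List ℕ → Prop}

theorem mem_parkers :
    l ∈ parkers m Q ↔ l.length = m ∧ (∀ x ∈ l, 1 ≤ x ∧ x ≤ m) ∧
      ∃ σ, parkAssign m 1 ∅ l = some σ ∧ Q l σ := by
  simp only [parkers, Finset.mem_filter, ← and_assoc]
  refine and_congr_left' ?_
  simp only [Finset.mem_image, Finset.mem_univ, true_and]
  constructor
  · rintro ⟨α, rfl⟩
    refine ⟨by simp [prefList], fun x hx => ?_⟩
    obtain ⟨i, rfl⟩ := (List.mem_ofFn' _ _).1 hx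
    have := (α i).isLt
    dsimp only
    omega
  · rintro ⟨rfl, hl⟩
    refine ⟨fun i => ⟨l[i] - 1, ?_⟩, ?_⟩
    · have := hl l[i] (List.getElem_mem _)
      omega
    · refine List.ext_getElem (by simp [prefList]) fun i h1 h2 => ?_
      have := hl l[i] (List.getElem_mem _)
      simp only [prefList, List.getElem_ofFn]
      simp only [Fin.getElem_fin]
      omega

theorem card_filter_VPF (R : (Fin m → Fin m) → Prop) [DecidablePred R]
    (h : ∀ α σ, parkAssign m 1 ∅ (prefList α) = some σ → (R α ↔ Q (prefList α) σ)) :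
    ((VPF m).filter R).card = (parkers m Q).card := by
  rw [← Finset.card_image_of_injective _ prefList_injective]
  congr 1
  ext l
  simp only [parkers, Finset.mem_image, Finset.mem_filter, VPF, VPFk, Finset.mem_univ, true_and,
    Option.isSome_iff_exists]
  constructor
  · rintro ⟨α, ⟨⟨σ, hσ⟩, hR⟩, rfl⟩
    exact ⟨⟨α, rfl⟩, σ, hσ, (h α σ hσ).1 hR⟩
  · rintro ⟨⟨α, rfl⟩, σ, hσ, hQ⟩
    exact ⟨α, ⟨⟨σ, hσ⟩, (h α σ hσ).2 hQ⟩, rfl⟩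

theorem card_VPF (m : ℕ) : (VPF m).card = (parkers m fun _ _ => True).card := by
  rw [← card_filter_VPF (fun _ => True) (by simp)]
  simp

theorem card_VPF_i (m c : ℕ) :
    (VPF_i m (c + 1)).card = (parkers m fun _ σ => σ[c]? = some m).card :=
  card_filter_VPF _ fun α σ h => by simp [spotOfCar, h]

theorem card_VPF_paren (m c : ℕ) :
    (VPF_paren m (c + 1)).card =
      (parkers m fun l σ => l[c]? = some m ∧ σ[c]? = some m).card :=
  card_filter_VPF _ fun α σ h => by simp [spotOfCar, prefOfCar, h]

theorem card_VPF_bracket (m c : ℕ) :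
    (VPF_bracket m (c + 1)).card =
      (parkers m fun l σ => l[c]? = some (m - 1) ∧ σ[c]? = some m).card :=
  card_filter_VPF _ fun α σ h => by simp [spotOfCar, prefOfCar, h]

/-- Classify by the car that parks in spot `s`. -/
theorem card_parkers_mem_take (t s : ℕ) :
    (parkers m fun l σ => s ∈ σ.take t ∧ Q l σ).card =
      ∑ c ∈ Finset.range t, (parkers m fun l σ => σ[c]? = some s ∧ Q l σ).card := by
  rw [← Finset.card_biUnion]
  · congr 1
    ext l
    simp only [Finset.mem_biUnion, mem_parkers, List.mem_take_iff_getElem?, Finset.mem_range]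
    grind
  · intro c _ d _ hcd
    rw [Function.onFun, Finset.disjoint_left]
    intro l h1 h2
    obtain ⟨-, -, σ, hσ, h1, -⟩ := mem_parkers.1 h1
    obtain ⟨-, -, σ', hσ', h2, -⟩ := mem_parkers.1 h2
    obtain rfl : σ = σ' := by simpa [hσ] using hσ'
    have hc := (List.getElem?_eq_some_iff.1 h1).1
    exact hcd ((List.getElem?_inj hc (nodup_of_parkAssign hσ).1).1 (h1.trans h2.symm))

theorem card_parkers_congr
    (h : ∀ l σ, l.length = m → (∀ x ∈ l, 1 ≤ x ∧ x ≤ m) → parkAssign m 1 ∅ l = some σ →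
      (Q l σ ↔ Q' l σ)) :
    (parkers m Q).card = (parkers m Q').card := by
  congr 1
  ext l
  simp only [mem_parkers]
  refine and_congr_right fun h1 => and_congr_right fun h2 => exists_congr fun σ =>
    and_congr_right fun h3 => h l σ h1 h2 h3

theorem forall_mem_range_of_notMem (h : ∀ x ∈ l, 1 ≤ x ∧ x ≤ m + 1) (hl : m + 1 ∉ l) :
    ∀ x ∈ l, 1 ≤ x ∧ x ≤ m := fun x hx =>
  ⟨(h x hx).1, Nat.le_of_lt_succ (lt_of_le_of_ne (h x hx).2 fun he => hl (by rwa [he] at hx))⟩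

theorem forall_mem_range_succ (h : ∀ x ∈ l, 1 ≤ x ∧ x ≤ m) : ∀ x ∈ l, 1 ≤ x ∧ x ≤ m + 1 :=
  fun x hx => ⟨(h x hx).1, (h x hx).2.trans (Nat.le_succ m)⟩

theorem forall_mem_append_cons {P : ℕ → Prop} {A B : List ℕ} {p : ℕ} :
    (∀ x ∈ A ++ p :: B, P x) ↔ (∀ x ∈ A, P x) ∧ P p ∧ ∀ x ∈ B, P x := by
  rw [List.forall_mem_append, List.forall_mem_cons]

/-- On a street with `m + 1` spots, cars that leave spot `m + 1` free behave as on a street with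
`m` spots. -/
theorem parkAssign_empty_of_notMem {A S : List ℕ} (hr : ∀ x ∈ A, 1 ≤ x ∧ x ≤ m + 1)
    (hS : parkAssign (m + 1) 1 ∅ A = some S) (hmS : m + 1 ∉ S) :
    (∀ x ∈ A, 1 ≤ x ∧ x ≤ m) ∧ parkAssign m 1 ∅ A = some S := by
  have h := (parkAssign_succ_of_notMem (fun x hx => (hr x hx).2) (Finset.notMem_empty _)).1
    ⟨hS, hmS⟩
  exact ⟨fun x hx => ⟨(hr x hx).1, h.1 x hx⟩, h.2⟩

theorem parkAssign_empty_succ {A S : List ℕ} (hr : ∀ x ∈ A, 1 ≤ x ∧ x ≤ m)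
    (hS : parkAssign m 1 ∅ A = some S) :
    parkAssign (m + 1) 1 ∅ A = some S ∧ m + 1 ∉ S :=
  (parkAssign_succ_of_notMem (fun x hx => (hr x hx).2.trans (Nat.le_succ m))
    (Finset.notMem_empty _)).2 ⟨fun x hx => (hr x hx).2, hS⟩

/-- Splitting off car `t`, which prefers spot `m` but parks in the last spot `m + 1`. -/
theorem card_parkers_bracket (hm : 2 ≤ m) {t : ℕ} (ht : t ≤ m) :
    (parkers (m + 1) fun l σ => l[t]? = some m ∧ σ[t]? = some (m + 1)).card =
      (parkers m fun _ σ => m ∈ σ.take t ∧ m - 1 ∈ σ.take t).card := by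
  rw [← Finset.card_image_of_injective (parkers m _) (List.insertIdx_injective t m)]
  congr 1
  ext l
  simp only [Finset.mem_image, mem_parkers]
  constructor
  · rintro ⟨hl, hr, σ, hσ, hp, hs⟩
    obtain ⟨A, B, rfl, rfl⟩ := List.getElem?_eq_some_iff_append.1 hp
    obtain ⟨S, s, T, rfl, hS, hstep, hT⟩ := parkAssign_append_cons_eq_some.1 hσ
    have hSA := length_of_parkAssign hS
    obtain rfl : s = m + 1 := by simpa [← hSA] using hs
    obtain ⟨hrA, -, hrB⟩ := forall_mem_append_cons.1 hr
    rw [Finset.empty_union] at hstep hT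
    have h1 := parkStep_eq_some hstep
    simp only [List.mem_toFinset] at h1
    obtain ⟨hmS, hmS'⟩ : m ∈ S ∧ m - 1 ∈ S := by
      clear * - h1 hm
      grind
    obtain ⟨hrA, hA⟩ := parkAssign_empty_of_notMem hrA hS h1.1
    have hB := notMem_of_parkAssign (by simp [hmS]) (by simp) hT
    have hrB := forall_mem_range_of_notMem hrB hB
    rw [parkAssign_succ_insert fun x hx => (hrB x hx).2] at hT
    refine ⟨A ++ B, ⟨?_, List.forall_mem_append.2 ⟨hrA, hrB⟩, S ++ T, ?_, ?_⟩,
      List.insertIdx_length_append⟩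
    · simp only [List.length_append, List.length_cons] at hl ⊢
      omega
    · exact parkAssign_append_eq_some.2 ⟨S, T, rfl, hA, by simpa using hT⟩
    · simp [← hSA, hmS, hmS']
  · rintro ⟨γ, ⟨hl, hr, σ, hσ, hm1, hm2⟩, rfl⟩
    obtain ⟨A, B, rfl, rfl⟩ : ∃ A B, A.length = t ∧ γ = A ++ B :=
      ⟨γ.take t, γ.drop t, by simp; omega, by simp⟩
    obtain ⟨S, T, rfl, hS, hT⟩ := parkAssign_append_eq_some.1 hσ
    have hSA := length_of_parkAssign hS
    obtain ⟨hrA, hrB⟩ := List.forall_mem_append.1 hr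
    rw [List.insertIdx_length_append]
    rw [← hSA, List.take_left] at hm1 hm2
    obtain ⟨hA, hmS⟩ := parkAssign_empty_succ hrA hS
    refine ⟨?_, forall_mem_append_cons.2 ⟨forall_mem_range_succ hrA, ⟨by omega, by omega⟩,
      forall_mem_range_succ hrB⟩, S ++ (m + 1) :: T, ?_, by simp, by simp [← hSA]⟩
    · simp only [List.length_append, List.length_cons] at hl ⊢
      omega
    refine parkAssign_append_cons_eq_some.2 ⟨S, m + 1, T, rfl, hA, ?_, ?_⟩
    · simp [parkStep, hm1, hm2, hmS]
    · rw [parkAssign_succ_insert fun x hx => (hrB x hx).2]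
      exact hT

/-- Splitting off car `j`, which prefers and takes the last spot `m + 1`: either no other car
prefers spot `m + 1`, or exactly one later car does, and it parks in spot `m`. -/
theorem parkers_paren_eq_union (hm : 1 ≤ m) {j t : ℕ} (hj : j ≤ t) (ht : t ≤ m) :
    (parkers (m + 1) fun l σ => m ∈ σ.take (t + 1) ∧
        l[j]? = some (m + 1) ∧ σ[j]? = some (m + 1)) =
      (parkers m fun _ σ => m ∈ σ.take t).image (fun l => l.insertIdx j (m + 1)) ∪
        (Finset.Ico j t).biUnion fun c =>
          (parkers m fun l σ => l[c]? = some m ∧ σ[c]? = some m).image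
            fun l => (l.set c (m + 1)).insertIdx j (m + 1) := by
  ext l
  simp only [Finset.mem_union, Finset.mem_biUnion, Finset.mem_image, mem_parkers, Finset.mem_Ico]
  constructor
  · rintro ⟨hl, hr, σ, hσ, hmt, hp, hs⟩
    obtain ⟨A, B, rfl, rfl⟩ := List.getElem?_eq_some_iff_append.1 hp
    obtain ⟨S, s, T, rfl, hS, hstep, hT⟩ := parkAssign_append_cons_eq_some.1 hσ
    have hSA := length_of_parkAssign hS
    obtain rfl : s = m + 1 := by simpa [← hSA] using hs
    obtain ⟨hrA, -, hrB⟩ := forall_mem_append_cons.1 hr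
    rw [Finset.empty_union] at hstep hT
    have h1 := (parkStep_eq_some hstep).1
    rw [List.mem_toFinset] at h1
    obtain ⟨hrA, hA⟩ := parkAssign_empty_of_notMem hrA hS h1
    rw [List.mem_take_succ_append_cons (by omega) (by simp)] at hmt
    simp only [List.length_append, List.length_cons] at hl
    by_cases hB : m + 1 ∈ B
    · right
      obtain ⟨B₁, B₂, rfl, hB₁⟩ := List.eq_append_cons_of_mem hB
      obtain ⟨T₁, s, T₂, rfl, hT₁, hstep₂, hT₂⟩ := parkAssign_append_cons_eq_some.1 hT
      obtain ⟨hm', rfl⟩ := (parkStep_last_eq_some hm (by simp)).1 hstep₂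
      simp only [Finset.mem_union, Finset.mem_insert, List.mem_toFinset, not_or] at hm'
      obtain ⟨hrB₁, -, hrB₂⟩ := forall_mem_append_cons.1 hrB
      have hTB := length_of_parkAssign hT₁
      have hB₂ := notMem_of_parkAssign (by simp) (by simp) hT₂
      have hrB₁ := forall_mem_range_of_notMem hrB₁ hB₁
      have hrB₂ := forall_mem_range_of_notMem hrB₂ hB₂
      rw [parkAssign_succ_insert fun x hx => (hrB₁ x hx).2] at hT₁
      rw [Finset.insert_union, Finset.insert_comm,
        parkAssign_succ_insert fun x hx => (hrB₂ x hx).2] at hT₂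
      have hct : (S ++ T₁).length < t := by
        by_contra hc
        rw [← List.append_assoc, List.take_append_of_le_length (by omega)] at hmt
        have := List.mem_of_mem_take hmt
        simp [hm'] at this
      have hlen : (A ++ B₁).length = (S ++ T₁).length := by simp [hSA, hTB]
      refine ⟨(A ++ B₁).length, ⟨by simp, hlen ▸ hct⟩, A ++ B₁ ++ s :: B₂,
        ⟨?_, forall_mem_append_cons.2 ⟨List.forall_mem_append.2 ⟨hrA, hrB₁⟩, ⟨hm, le_rfl⟩, hrB₂⟩,
          S ++ T₁ ++ s :: T₂, ?_, by simp, ?_⟩, ?_⟩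
      · simp only [List.length_append, List.length_cons] at hl ⊢
        omega
      · refine parkAssign_append_cons_eq_some.2 ⟨S ++ T₁, s, T₂, rfl, ?_, ?_, ?_⟩
        · exact parkAssign_append_eq_some.2 ⟨S, T₁, rfl, hA, by simpa using hT₁⟩
        · simp [parkStep, hm']
        · simpa using hT₂
      · exact List.getElem?_eq_some_iff_append.2 ⟨S ++ T₁, T₂, hlen.symm, rfl⟩
      · rw [List.set_length_append, List.append_assoc, List.insertIdx_length_append]
    · left
      have hrB := forall_mem_range_of_notMem hrB hB
      rw [parkAssign_succ_insert fun x hx => (hrB x hx).2] at hT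
      refine ⟨A ++ B, ⟨?_, List.forall_mem_append.2 ⟨hrA, hrB⟩, S ++ T, ?_, hmt⟩,
        List.insertIdx_length_append⟩
      · rw [List.length_append]
        omega
      · exact parkAssign_append_eq_some.2 ⟨S, T, rfl, hA, by simpa using hT⟩
  · rintro (⟨γ, ⟨hl, hr, σ, hσ, hmt⟩, rfl⟩ | ⟨c, ⟨hjc, hct⟩, γ, ⟨hl, hr, σ, hσ, hp, hs⟩, rfl⟩)
    · obtain ⟨A, B, rfl, rfl⟩ : ∃ A B, A.length = j ∧ γ = A ++ B :=
        ⟨γ.take j, γ.drop j, by simp; omega, by simp⟩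
      obtain ⟨S, T, rfl, hS, hT⟩ := parkAssign_append_eq_some.1 hσ
      have hSA := length_of_parkAssign hS
      obtain ⟨hrA, hrB⟩ := List.forall_mem_append.1 hr
      rw [List.insertIdx_length_append]
      obtain ⟨hA, hmS⟩ := parkAssign_empty_succ hrA hS
      refine ⟨?_, forall_mem_append_cons.2 ⟨forall_mem_range_succ hrA, ⟨by omega, le_rfl⟩,
        forall_mem_range_succ hrB⟩, S ++ (m + 1) :: T, ?_, ?_, by simp, by simp [← hSA]⟩
      · simp only [List.length_append, List.length_cons] at hl ⊢
        omega
      · refine parkAssign_append_cons_eq_some.2 ⟨S, m + 1, T, rfl, hA, ?_, ?_⟩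
        · simp [parkStep, hmS]
        · rw [parkAssign_succ_insert fun x hx => (hrB x hx).2]
          exact hT
      · rwa [List.mem_take_succ_append_cons (by omega) (by simp)]
    · obtain ⟨G, B₂, rfl, rfl⟩ := List.getElem?_eq_some_iff_append.1 hp
      obtain ⟨A, B₁, rfl, rfl⟩ : ∃ A B, A.length = j ∧ G = A ++ B :=
        ⟨G.take j, G.drop j, by simp; omega, by simp⟩
      obtain ⟨S', s, T₂, rfl, hS', hstep, hT₂⟩ := parkAssign_append_cons_eq_some.1 hσ
      have hSG := length_of_parkAssign hS'
      obtain rfl : s = m := by simpa [← hSG] using hs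
      obtain ⟨S, T₁, rfl, hS, hT₁⟩ := parkAssign_append_eq_some.1 hS'
      have hSA := length_of_parkAssign hS
      have hsS := (parkStep_eq_some hstep).1
      simp only [Finset.empty_union, List.mem_toFinset, List.mem_append, not_or] at hsS
      obtain ⟨hrG, -, hrB₂⟩ := forall_mem_append_cons.1 hr
      obtain ⟨hrA, hrB₁⟩ := List.forall_mem_append.1 hrG
      obtain ⟨hA, hmS⟩ := parkAssign_empty_succ hrA hS
      rw [List.set_length_append, List.append_assoc, List.insertIdx_length_append]
      refine ⟨?_, forall_mem_append_cons.2 ⟨forall_mem_range_succ hrA, ⟨by omega, le_rfl⟩,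
        forall_mem_append_cons.2 ⟨forall_mem_range_succ hrB₁, ⟨by omega, le_rfl⟩,
          forall_mem_range_succ hrB₂⟩⟩, S ++ (s + 1) :: (T₁ ++ s :: T₂), ?_, ?_, by simp,
        by simp [← hSA]⟩
      · simp only [List.length_append, List.length_cons] at hl ⊢
        omega
      · refine parkAssign_append_cons_eq_some.2 ⟨S, s + 1, _, rfl, hA, ?_, ?_⟩
        · simp [parkStep, hmS]
        · refine parkAssign_append_cons_eq_some.2 ⟨T₁, s, T₂, rfl, ?_, ?_, ?_⟩
          · rw [parkAssign_succ_insert fun x hx => (hrB₁ x hx).2]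
            exact hT₁
          · rw [parkStep_last_eq_some hm (by simp)]
            simp [hsS]
          · rw [Finset.insert_union, Finset.insert_comm,
              parkAssign_succ_insert fun x hx => (hrB₂ x hx).2]
            simpa using hT₂
      · rw [List.mem_take_succ_append_cons (by omega) (by simp), List.mem_take_iff_getElem?]
        exact ⟨_, hct, by rw [← List.append_assoc]; exact hs⟩

theorem getElem?_ne_of_mem_parkers (hl : l ∈ parkers m Q) {c : ℕ} : l[c]? ≠ some (m + 1) :=
  fun h => absurd ((mem_parkers.1 hl).2.1 _ (List.mem_of_getElem? h)).2 (by omega)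

theorem card_parkers_paren (hm : 1 ≤ m) {j t : ℕ} (hj : j ≤ t) (ht : t ≤ m) :
    (parkers (m + 1) fun l σ => m ∈ σ.take (t + 1) ∧
        l[j]? = some (m + 1) ∧ σ[j]? = some (m + 1)).card =
      (parkers m fun _ σ => m ∈ σ.take t).card +
        ∑ c ∈ Finset.Ico j t,
          (parkers m fun l σ => l[c]? = some m ∧ σ[c]? = some m).card := by
  have hinj := List.insertIdx_injective j (m + 1)
  rw [parkers_paren_eq_union hm hj ht, Finset.card_union_of_disjoint, Finset.card_biUnion,
    Finset.card_image_of_injective _ hinj]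
  · congr 1
    refine Finset.sum_congr rfl fun c hc => Finset.card_image_of_injOn ?_
    intro l hl l' hl' h
    have h := hinj h
    obtain ⟨-, -, -, -, hp, -⟩ := mem_parkers.1 hl
    obtain ⟨-, -, -, -, hp', -⟩ := mem_parkers.1 hl'
    refine List.ext_getElem? fun d => ?_
    have := congrArg (·[d]?) h
    simp only [List.getElem?_set] at this
    grind
  · intro c hc d hd hcd
    rw [Function.onFun, Finset.disjoint_left]
    intro l h1 h2
    obtain ⟨γ, hγ, rfl⟩ := Finset.mem_image.1 h1
    obtain ⟨γ', hγ', h⟩ := Finset.mem_image.1 h2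
    have hl := (mem_parkers.1 hγ).1
    have h := congrArg (·[c]?) (hinj h)
    have hcm := Finset.mem_Ico.1 hc
    simp only [List.getElem?_set, if_neg hcd.symm, if_true, if_pos (hl ▸ hcm.2.trans_le ht)] at h
    exact getElem?_ne_of_mem_parkers hγ' h
  · rw [Finset.disjoint_left]
    intro l h1 h2
    obtain ⟨γ, hγ, rfl⟩ := Finset.mem_image.1 h1
    obtain ⟨c, hc, h2⟩ := Finset.mem_biUnion.1 h2
    obtain ⟨γ', hγ', h⟩ := Finset.mem_image.1 h2
    have hl := (mem_parkers.1 hγ').1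
    have h := congrArg (·[c]?) (hinj h)
    have hcm := Finset.mem_Ico.1 hc
    simp only [List.getElem?_set, if_true, if_pos (hl ▸ hcm.2.trans_le ht)] at h
    exact getElem?_ne_of_mem_parkers hγ h.symm

theorem card_parkers_mem_take_self (hm : 1 ≤ m) :
    (parkers m fun _ σ => m ∈ σ.take m).card = (parkers m fun _ _ => True).card :=
  card_parkers_congr fun l σ hl hr hσ => by
    rw [List.take_of_length_le (by rw [length_of_parkAssign hσ, hl])]
    simp [mem_of_parkAssign_empty hr hl hσ hm le_rfl]

theorem card_VPF_paren_succ (hm : 1 ≤ m) {c : ℕ} (hc : c ≤ m) :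
    (VPF_paren (m + 1) (c + 1)).card =
      (VPF m).card + ∑ d ∈ Finset.Ico c m, (VPF_paren m (d + 1)).card := by
  simp only [card_VPF_paren, card_VPF]
  rw [← card_parkers_mem_take_self hm, ← card_parkers_paren hm hc le_rfl]
  refine card_parkers_congr fun l σ hl hr hσ => ?_
  rw [List.take_of_length_le (by rw [length_of_parkAssign hσ, hl])]
  simp [mem_of_parkAssign_empty hr hl hσ hm (Nat.le_succ m)]

/-- A car in the last spot preferred it, or was pushed there from the spot before. -/
theorem card_parkers_split (hm : 1 ≤ m) {j t : ℕ} (hj : j < t) :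
    (parkers (m + 1) fun _ σ => σ[j]? = some (m + 1) ∧ m ∈ σ.take t).card =
      (parkers (m + 1) fun l σ => l[j]? = some m ∧ σ[j]? = some (m + 1)).card +
      (parkers (m + 1) fun l σ => m ∈ σ.take t ∧
        l[j]? = some (m + 1) ∧ σ[j]? = some (m + 1)).card := by
  rw [← Finset.card_union_of_disjoint]
  · congr 1
    ext l
    simp only [Finset.mem_union, mem_parkers, ← and_or_left, ← exists_or]
    refine and_congr_right fun hl => and_congr_right fun hr => exists_congr fun σ =>
      and_congr_right fun hσ => ?_
    by_cases hs : σ[j]? = some (m + 1)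
    · obtain ⟨p, hp⟩ : ∃ p, l[j]? = some p := by
        have := (List.getElem?_eq_some_iff.1 hs).1
        rw [length_of_parkAssign hσ] at this
        exact ⟨l[j], List.getElem?_eq_getElem this⟩
      obtain ⟨A, B, rfl, rfl⟩ := List.getElem?_eq_some_iff_append.1 hp
      obtain ⟨S, s, T, rfl, hS, hstep, hT⟩ := parkAssign_append_cons_eq_some.1 hσ
      have hSA := length_of_parkAssign hS
      obtain rfl : s = m + 1 := by simpa [← hSA] using hs
      have h1 := parkStep_eq_some hstep
      simp only [Finset.empty_union, List.mem_toFinset] at h1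
      have hpr := hr p (by simp)
      have hmem : p = m → m ∈ (S ++ (m + 1) :: T).take t := by
        intro hpm
        have : m ∈ S := by
          subst hpm
          have := h1.2
          grind
        rw [List.take_append]
        rw [List.take_of_length_le (by omega)]
        simp [this]
      have hpm : p = m ∨ p = m + 1 := by omega
      obtain rfl | rfl := hpm
      · simp [hmem]
      · simp [← hSA]
    · simp [hs]
  · rw [Finset.disjoint_left]
    intro l h1 h2
    obtain ⟨-, -, σ, hσ, h1, -⟩ := mem_parkers.1 h1
    obtain ⟨-, -, σ', hσ', -, h2, -⟩ := mem_parkers.1 h2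
    simp [h1] at h2

/-- The recurrence with all car indices starting at `0`. -/
theorem card_VPF_bracket_rec (hm : 1 ≤ m) {u : ℕ} (hu : u ≤ m + 1) :
    (VPF_bracket (m + 3) (u + 2)).card =
      ∑ j ∈ Finset.range (u + 1), (VPF_bracket (m + 2) (j + 1)).card +
      (u + 1) * ∑ c ∈ Finset.range u, (VPF_i (m + 1) (c + 1)).card +
      ∑ j ∈ Finset.range (u + 1), ∑ c ∈ Finset.Ico j u, (VPF_paren (m + 1) (c + 1)).card := by
  have hI := card_parkers_mem_take (m := m + 1) (Q := fun _ _ => True) u (m + 1)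
  simp only [and_true] at hI
  simp only [card_VPF_bracket, card_VPF_i, card_VPF_paren, ← hI]
  rw [show m + 3 - 1 = m + 2 from rfl, card_parkers_bracket (by omega) (by omega),
    card_parkers_mem_take, ← Finset.card_range (u + 1), ← smul_eq_mul, ← Finset.sum_const,
    Finset.card_range, ← Finset.sum_add_distrib, ← Finset.sum_add_distrib]
  refine Finset.sum_congr rfl fun j hj => ?_
  have hj := Finset.mem_range.1 hj
  rw [add_assoc, ← card_parkers_paren (by omega) (by omega) hu]
  exact card_parkers_split (by omega) hj

end Counting

section Sums

theorem sum_range_sum_Ico (f : ℕ → ℕ) (u : ℕ) :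
    ∑ j ∈ Finset.range (u + 1), ∑ c ∈ Finset.Ico j u, f c =
      ∑ c ∈ Finset.range u, (c + 1) * f c := by
  induction u with
  | zero => simp
  | succ u ih =>
    rw [Finset.sum_range_succ, Finset.Ico_self, Finset.sum_empty, add_zero,
      Finset.sum_range_succ (fun c => (c + 1) * f c), ← ih, ← Finset.card_range (u + 1), ← smul_eq_mul,
      ← Finset.sum_const, Finset.card_range, ← Finset.sum_add_distrib]
    refine Finset.sum_congr rfl fun j hj => ?_
    rw [Finset.sum_Ico_succ_top (by grind)]

theorem sum_Icc_one (f : ℕ → ℕ) (u : ℕ) :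
    ∑ ℓ ∈ Finset.Icc 1 u, f ℓ = ∑ c ∈ Finset.range u, f (c + 1) := by
  rw [Finset.range_eq_Ico, Finset.sum_Ico_add' f 0 u 1]
  rfl

theorem succ_mul_div_two (u : ℕ) : (u + 1) * (u + 2) / 2 = u * (u + 1) / 2 + (u + 1) := by
  rw [show (u + 1) * (u + 2) = u * (u + 1) + (u + 1) * 2 by ring,
    Nat.add_mul_div_right _ _ (by norm_num)]

theorem sum_triangular (V M u : ℕ) (p : ℕ → ℕ) (hu : u ≤ M + 1) :
    ∑ c ∈ Finset.range u, (c + 1) * (V + ∑ d ∈ Finset.Ico c M, p (d + 1)) =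
      u * (u + 1) / 2 * V + ∑ ℓ ∈ Finset.Icc 1 (u - 1), ℓ * (ℓ + 1) / 2 * p ℓ +
        u * (u + 1) / 2 * ∑ ℓ ∈ Finset.Icc u M, p ℓ := by
  induction u with
  | zero => simp
  | succ u ih =>
    rw [Finset.sum_range_succ, ih (by omega), succ_mul_div_two, Nat.add_sub_cancel]
    have h1 : ∑ d ∈ Finset.Ico u M, p (d + 1) = ∑ ℓ ∈ Finset.Icc (u + 1) M, p ℓ := by
      rw [Finset.sum_Ico_add' p u M 1]
      rfl
    have h2 : ∑ ℓ ∈ Finset.Icc u M, p ℓ = p u + ∑ ℓ ∈ Finset.Icc (u + 1) M, p ℓ := by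
      rw [Finset.Icc_add_one_left_eq_Ioc,
        Finset.add_sum_Ioc_eq_sum_Icc (Nat.le_of_succ_le_succ hu)]
    have h3 : ∑ ℓ ∈ Finset.Icc 1 u, ℓ * (ℓ + 1) / 2 * p ℓ =
        ∑ ℓ ∈ Finset.Icc 1 (u - 1), ℓ * (ℓ + 1) / 2 * p ℓ + u * (u + 1) / 2 * p u := by
      cases u with
      | zero => simp
      | succ u => rw [Finset.sum_Icc_succ_top (by omega), Nat.add_sub_cancel]
    rw [h1, h2, h3]
    ring

end Sums

/-- For every `n ≥ 4` and `i ∈ [n]`,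
`|VPF_{n,[i]}| = ((i−1)(i−2)/2)·|VPF_{n-3}| + ∑_{ℓ=1}^{i-1} |VPF_{n-1,[ℓ]}|
  + (i−1)·∑_{ℓ=1}^{i-2} |VPF_{n-2,ℓ}| + ∑_{ℓ=1}^{i-3} (ℓ(ℓ+1)/2)·|VPF_{n-3,(ℓ)}|
  + ((i−2)(i−1)/2)·∑_{ℓ=i-2}^{n-3} |VPF_{n-3,(ℓ)}|`. -/
theorem vpf_bracket_card_eq (n : ℕ) (hn : 4 ≤ n) (i : ℕ) (hi : i ∈ Finset.Icc 1 n) :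
    (VPF_bracket n i).card =
      (i-1) * (i-2) / 2 * (VPF (n-3)).card
        + ∑ ℓ ∈ Finset.Icc 1 (i-1), (VPF_bracket (n-1) ℓ).card
        + (i-1) * ∑ ℓ ∈ Finset.Icc 1 (i-2), (VPF_i (n-2) ℓ).card
        + ∑ ℓ ∈ Finset.Icc 1 (i-3), ℓ * (ℓ+1) / 2 * (VPF_paren (n-3) ℓ).card
        + (i-2) * (i-1) / 2 * ∑ ℓ ∈ Finset.Icc (i-2) (n-3), (VPF_paren (n-3) ℓ).card := by
  obtain ⟨m, rfl⟩ := Nat.exists_eq_add_of_le' hn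
  obtain ⟨h1, h2⟩ := Finset.mem_Icc.1 hi
  obtain rfl | ⟨u, rfl⟩ : i = 1 ∨ ∃ u, i = u + 2 :=
    (Nat.eq_or_lt_of_le h1).imp Eq.symm Nat.exists_eq_add_of_le'
  · have h := card_parkers_bracket (m := m + 3) (t := 0) (by omega) (by omega)
    have h0 := card_parkers_mem_take (m := m + 3) (Q := fun _ σ => m + 3 - 1 ∈ σ.take 0) 0 (m + 3)
    rw [h0, Finset.range_zero, Finset.sum_empty] at h
    simpa using (card_VPF_bracket (m + 4) 0).trans h
  · have hu : u ≤ m + 1 + 1 := by omega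
    have hP : ∀ c ∈ Finset.range u, (c + 1) * (VPF_paren (m + 1 + 1) (c + 1)).card =
        (c + 1) * ((VPF (m + 1)).card +
          ∑ d ∈ Finset.Ico c (m + 1), (VPF_paren (m + 1) (d + 1)).card) := fun c hc => by
      rw [card_VPF_paren_succ (by omega)
        (Nat.le_of_lt_succ ((Finset.mem_range.1 hc).trans_le hu))]
    rw [card_VPF_bracket_rec (m := m + 1) (by omega) hu, sum_range_sum_Ico,
      Finset.sum_congr rfl hP, sum_triangular _ _ _ (fun ℓ => (VPF_paren (m + 1) ℓ).card) hu]
    simp only [sum_Icc_one _ (u + 2 - 1), sum_Icc_one _ (u + 2 - 2)]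
    change _ = (u + 1) * u / 2 * (VPF (m + 1)).card +
      ∑ j ∈ Finset.range (u + 1), (VPF_bracket (m + 1 + 2) (j + 1)).card +
      (u + 1) * ∑ c ∈ Finset.range u, (VPF_i (m + 1 + 1) (c + 1)).card +
      ∑ ℓ ∈ Finset.Icc 1 (u - 1), ℓ * (ℓ + 1) / 2 * (VPF_paren (m + 1) ℓ).card +
      u * (u + 1) / 2 * ∑ ℓ ∈ Finset.Icc u (m + 1), (VPF_paren (m + 1) ℓ).card
    rw [mul_comm (u + 1) u]
    ring
end

section
/- Let ρ_1, ρ_2, ρ_3 ∈ ℂ be the three (distinct) complex roots of the polynomial x^3 + 2x − 1. Then for every integer n ≥ 1, the number of non-increasing vacillating parking functions of length n satisfies |VPF_n^↓| = Σ_{j=1}^{3} ((ρ_j^2 + ρ_j)/(3ρ_j^2 + 2)) · ρ_j^{−(n+1)}, the sum being a complex number equal to the natural number |VPF_n^↓|. -/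
/-- The set of non-increasing vacillating parking functions of length `n`. -/
def VPFdown (n : ℕ) : Finset (Fin n → Fin n) :=
  (VPF n).filter fun α => ∀ i j : Fin n, i ≤ j → α j ≤ α i

theorem isSome_parkAssign_cons {n k : ℕ} {occ : Finset ℕ} {p : ℕ} {ps : List ℕ} :
    (parkAssign n k occ (p :: ps)).isSome ↔
      ∃ s, parkStep n k occ p = some s ∧ (parkAssign n k (insert s occ) ps).isSome := by
  rw [parkAssign]
  cases parkStep n k occ p <;> simp

theorem parkStep_one_eq_some {n : ℕ} {occ : Finset ℕ} {p s : ℕ} (hp : 1 ≤ p)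
    (h : parkStep n 1 occ p = some s) : s ∉ occ ∧ 1 ≤ s ∧ s ≤ p + 1 := by
  unfold parkStep at h
  split_ifs at h <;> simp only [Option.some.injEq] at h <;> subst h <;> grind

/-- Cars with preferences in `[1, c]` can only use the free spots in `[1, c + 1]`. -/
theorem length_le_card_of_isSome_parkAssign {n c : ℕ} :
    ∀ {l : List ℕ} {occ : Finset ℕ}, (∀ x ∈ l, 1 ≤ x ∧ x ≤ c) →
      (parkAssign n 1 occ l).isSome → l.length ≤ (Finset.Icc 1 (c + 1) \ occ).card
  | [], _, _, _ => Nat.zero_le _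
  | p :: ps, occ, hl, h => by
    obtain ⟨s, hs, h'⟩ := isSome_parkAssign_cons.1 h
    have ih := length_le_card_of_isSome_parkAssign
      (fun x hx => hl x (List.mem_cons_of_mem _ hx)) h'
    have hp := hl p List.mem_cons_self
    obtain ⟨hso, hs1, hsp⟩ := parkStep_one_eq_some hp.1 hs
    have hmem : s ∈ Finset.Icc 1 (c + 1) \ occ := by
      simp only [Finset.mem_sdiff, Finset.mem_Icc]
      exact ⟨⟨hs1, by omega⟩, hso⟩
    rw [Finset.sdiff_insert] at ih
    have := Finset.card_erase_add_one hmem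
    simp only [List.length_cons]
    omega

/-- The non-increasing preference lists of `m` cars that fill the spots `1, …, m` of a street
whose spots from `m + 1` on are occupied. -/
def fillingLists : ℕ → Finset (List ℕ)
  | 0 => {[]}
  | 1 => {[2], [1]}
  | 2 => {[3, 2], [3, 1], [2, 2], [2, 1], [1, 1]}
  | m + 3 =>
    (fillingLists (m + 2)).image ((m + 4) :: ·) ∪ (fillingLists (m + 2)).image ((m + 3) :: ·) ∪
      (fillingLists m).image fun t => (m + 2) :: (m + 2) :: (m + 2) :: t

/-- The elements of `fillingLists m` not starting with `m + 1`. -/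
def initialLists : ℕ → Finset (List ℕ)
  | 0 => {[]}
  | 1 => {[1]}
  | 2 => {[2, 2], [2, 1], [1, 1]}
  | m + 3 =>
    (fillingLists (m + 2)).image ((m + 3) :: ·) ∪
      (fillingLists m).image fun t => (m + 2) :: (m + 2) :: (m + 2) :: t

theorem mem_initialLists_succ {m : ℕ} {l : List ℕ} :
    l ∈ initialLists (m + 1) ↔ (∃ t ∈ fillingLists m, l = (m + 1) :: t) ∨
      (m = 1 ∧ l = [1, 1]) ∨
      ∃ k, m = k + 2 ∧ ∃ t ∈ fillingLists k, l = m :: m :: m :: t := by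
  match m with
  | 0 => simp [initialLists, fillingLists]
  | 1 => simp [initialLists, fillingLists, or_assoc]
  | k + 2 => simp [initialLists, eq_comm]

theorem mem_fillingLists_succ {m : ℕ} {l : List ℕ} :
    l ∈ fillingLists (m + 1) ↔
      (∃ t ∈ fillingLists m, l = (m + 2) :: t) ∨ l ∈ initialLists (m + 1) := by
  match m with
  | 0 => simp [initialLists, fillingLists]
  | 1 => simp [initialLists, fillingLists, or_assoc]
  | k + 2 => simp [initialLists, fillingLists, eq_comm]

theorem fillingLists_props (m : ℕ) : ∀ l ∈ fillingLists m,
    l.length = m ∧ l.Pairwise (· ≥ ·) ∧ ∀ x ∈ l, 1 ≤ x ∧ x ≤ m + 1 := by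
  induction m using Nat.strong_induction_on with
  | _ m ih =>
    match m with
    | 0 => simp [fillingLists]
    | m + 1 =>
      intro l hl
      rw [mem_fillingLists_succ, mem_initialLists_succ] at hl
      rcases hl with ⟨t, ht, rfl⟩ | ⟨t, ht, rfl⟩ | ⟨rfl, rfl⟩ | ⟨k, rfl, t, ht, rfl⟩
      · obtain ⟨h1, h2, h3⟩ := ih m (by omega) t ht
        simp only [List.length_cons, List.pairwise_cons, List.forall_mem_cons]
        grind
      · obtain ⟨h1, h2, h3⟩ := ih m (by omega) t ht
        simp only [List.length_cons, List.pairwise_cons, List.forall_mem_cons]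
        grind
      · simp
      · obtain ⟨h1, h2, h3⟩ := ih k (by omega) t ht
        simp only [List.length_cons, List.pairwise_cons, List.forall_mem_cons]
        grind

theorem initialLists_props {m : ℕ} {l : List ℕ} (hl : l ∈ initialLists (m + 1)) :
    l.length = m + 1 ∧ l.Pairwise (· ≥ ·) ∧ ∀ x ∈ l, 1 ≤ x ∧ x ≤ m + 1 := by
  obtain ⟨h1, h2, h3⟩ := fillingLists_props (m + 1) l (mem_fillingLists_succ.2 (.inr hl))
  refine ⟨h1, h2, fun x hx => ⟨(h3 x hx).1, ?_⟩⟩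
  rw [mem_initialLists_succ] at hl
  have key : ∀ k, ∀ t ∈ fillingLists k, ∀ x ∈ t, x ≤ k + 1 :=
    fun k t ht x hx => ((fillingLists_props k t ht).2.2 x hx).2
  grind

theorem isSome_parkAssign_iff_mem_fillingLists {n : ℕ} (m : ℕ) (hmn : m ≤ n) :
    ∀ l : List ℕ, l.length = m → l.Pairwise (· ≥ ·) → (∀ x ∈ l, 1 ≤ x ∧ x ≤ n) →
      ((parkAssign n 1 (Finset.Icc (m + 1) n) l).isSome ↔ l ∈ fillingLists m) := by
  induction m using Nat.strong_induction_on with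
  | _ m ih =>
    match m with
    | 0 =>
      intro l hl _ _
      obtain rfl := List.length_eq_zero_iff.1 hl
      simp [parkAssign, fillingLists]
    | m + 1 =>
      rintro (_ | ⟨p, ps⟩) hlen hs hb
      · simp at hlen
      simp only [List.length_cons, Nat.add_right_cancel_iff] at hlen
      simp only [List.pairwise_cons] at hs
      simp only [List.forall_mem_cons] at hb
      obtain ⟨hps, hs⟩ := hs
      obtain ⟨⟨hp1, hpn⟩, hb⟩ := hb
      have hins : insert (m + 1) (Finset.Icc (m + 1 + 1) n) = Finset.Icc (m + 1) n := by
        ext x; simp only [Finset.mem_insert, Finset.mem_Icc]; omega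
      have ihm := ih m (by omega) (by omega) ps hlen hs hb
      rw [mem_fillingLists_succ, mem_initialLists_succ]
      rcases lt_or_ge (m + 2) p with hp | hp
      · have hstep : parkStep n 1 (Finset.Icc (m + 1 + 1) n) p = none := by
          simp only [parkStep, Finset.mem_Icc]
          grind
        rw [isSome_parkAssign_cons, hstep]
        grind
      rcases eq_or_lt_of_le hp with rfl | hp
      · have hstep : parkStep n 1 (Finset.Icc (m + 1 + 1) n) (m + 2) = some (m + 1) := by
          simp only [parkStep, Finset.mem_Icc]
          grind
        rw [isSome_parkAssign_cons, hstep]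
        simp only [Option.some.injEq, exists_eq_left', hins, ihm]
        grind
      have hstep : parkStep n 1 (Finset.Icc (m + 1 + 1) n) p = some p := by
        simp only [parkStep, Finset.mem_Icc]
        grind
      rw [isSome_parkAssign_cons, hstep]
      simp only [Option.some.injEq, exists_eq_left']
      rcases eq_or_lt_of_le (Nat.lt_succ_iff.1 hp) with rfl | hp
      · rw [hins, ihm]
        grind
      have hpm : p ≤ m := by omega
      rcases ps with _ | ⟨q, qs⟩
      · simp at hlen; omega
      have hqp : q ≤ p := hps q List.mem_cons_self
      rcases lt_or_ge q m with hq | hq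
      · have hR : ¬ (parkAssign n 1 (insert p (Finset.Icc (m + 1 + 1) n)) (q :: qs)).isSome := by
          intro h
          have hle := length_le_card_of_isSome_parkAssign (c := m - 1)
            (by simp only [List.pairwise_cons] at hs; grind) h
          have hsub : Finset.Icc 1 (m - 1 + 1) \ insert p (Finset.Icc (m + 1 + 1) n) ⊆
              (Finset.Icc 1 m).erase p := by
            intro x
            simp only [Finset.mem_sdiff, Finset.mem_insert, Finset.mem_Icc, Finset.mem_erase]
            omega
          have := Finset.card_le_card hsub
          rw [Finset.card_erase_of_mem (by simp; omega), Nat.card_Icc] at this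
          omega
        simp only [hR]
        grind
      obtain rfl : q = m := by omega
      obtain rfl : p = q := by omega
      simp only [List.length_cons] at hlen
      match p, hlen with
      | 1, hlen =>
        obtain rfl := List.length_eq_zero_iff.1 (Nat.add_right_cancel hlen : qs.length = 0)
        have : parkStep n 1 (insert 1 (Finset.Icc 3 n)) 1 = some 2 := by
          simp [parkStep]; omega
        simp [parkAssign, this]
      | k + 2, hlen =>
        have hstep2 : parkStep n 1 (insert (k + 2) (Finset.Icc (k + 2 + 1 + 1) n)) (k + 2) =
            some (k + 1) := by
          simp only [parkStep, Finset.mem_insert, Finset.mem_Icc]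
          grind
        rw [isSome_parkAssign_cons, hstep2]
        simp only [Option.some.injEq, exists_eq_left']
        rcases qs with _ | ⟨r, rs⟩
        · simp at hlen
        simp only [List.length_cons] at hlen
        simp only [List.pairwise_cons, List.forall_mem_cons] at hs hps hb
        rcases lt_or_ge r (k + 2) with hr | hr
        · have hR : ¬ (parkAssign n 1 (insert (k + 1) (insert (k + 2)
              (Finset.Icc (k + 2 + 1 + 1) n))) (r :: rs)).isSome := by
            intro h
            have hle := length_le_card_of_isSome_parkAssign (c := k + 1) (by grind) h
            have hsub : Finset.Icc 1 (k + 1 + 1) \ insert (k + 1) (insert (k + 2)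
                (Finset.Icc (k + 2 + 1 + 1) n)) ⊆ Finset.Icc 1 k := by
              intro x
              simp only [Finset.mem_sdiff, Finset.mem_insert, Finset.mem_Icc]
              omega
            have := Finset.card_le_card hsub
            rw [Nat.card_Icc] at this
            simp only [List.length_cons] at hle
            omega
          simp only [hR]
          grind
        obtain rfl : r = k + 2 := by omega
        have hstep3 : parkStep n 1 (insert (k + 1) (insert (k + 2)
            (Finset.Icc (k + 2 + 1 + 1) n))) (k + 2) = some (k + 3) := by
          simp only [parkStep, Finset.mem_insert, Finset.mem_Icc]
          grind
        have hins3 : insert (k + 3) (insert (k + 1) (insert (k + 2)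
            (Finset.Icc (k + 2 + 1 + 1) n))) = Finset.Icc (k + 1) n := by
          ext x; simp only [Finset.mem_insert, Finset.mem_Icc]; omega
        rw [isSome_parkAssign_cons, hstep3]
        simp only [Option.some.injEq, exists_eq_left', hins3]
        rw [ih k (by omega) (by omega) rs (by omega) hs.2.2 hb.2.2]
        grind

theorem mem_initialLists_iff {n : ℕ} {l : List ℕ} :
    l ∈ initialLists (n + 1) ↔ l.length = n + 1 ∧ l.Pairwise (· ≥ ·) ∧
      (∀ x ∈ l, 1 ≤ x ∧ x ≤ n + 1) ∧ (parkAssign (n + 1) 1 ∅ l).isSome := by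
  have hiff := isSome_parkAssign_iff_mem_fillingLists (n + 1) (le_refl (n + 1)) l
  rw [Finset.Icc_eq_empty (by omega)] at hiff
  constructor
  · intro h
    obtain ⟨h1, h2, h3⟩ := initialLists_props h
    exact ⟨h1, h2, h3, (hiff h1 h2 h3).2 (mem_fillingLists_succ.2 (.inr h))⟩
  · rintro ⟨h1, h2, h3, h4⟩
    rcases mem_fillingLists_succ.1 ((hiff h1 h2 h3).1 h4) with ⟨t, -, rfl⟩ | h
    · have := (h3 (n + 2) List.mem_cons_self).2
      omega
    · exact h

theorem image_prefList_VPFdown (n : ℕ) :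
    (VPFdown (n + 1)).image prefList = initialLists (n + 1) := by
  ext l
  rw [mem_initialLists_iff]
  simp only [Finset.mem_image, VPFdown, VPF, VPFk, Finset.mem_filter, Finset.mem_univ, true_and]
  constructor
  · rintro ⟨α, ⟨hα, hmono⟩, rfl⟩
    refine ⟨by simp [prefList], ?_, ?_, hα⟩
    · simp only [prefList, List.pairwise_ofFn]
      intro i j hij
      exact Nat.succ_le_succ (hmono i j hij.le)
    · simp only [prefList, List.forall_mem_ofFn_iff]
      intro i
      exact ⟨by omega, (α i).isLt⟩
  · rintro ⟨h1, h2, h3, h4⟩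
    have hb : ∀ i : Fin (n + 1), 1 ≤ l[(i : ℕ)] ∧ l[(i : ℕ)] ≤ n + 1 :=
      fun i => h3 _ (List.getElem_mem _)
    have hpref : prefList (fun i : Fin (n + 1) =>
        (⟨l[(i : ℕ)] - 1, by have := hb i; omega⟩ : Fin (n + 1))) = l := by
      apply List.ext_getElem
      · simp [prefList, h1]
      · intro i hi hi'
        have := hb ⟨i, by omega⟩
        simp only [prefList, List.getElem_ofFn]
        exact Nat.sub_add_cancel this.1
    refine ⟨_, ⟨by rw [hpref]; exact h4, fun i j hij => ?_⟩, hpref⟩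
    rcases eq_or_lt_of_le hij with rfl | hij
    · exact le_rfl
    · have := List.pairwise_iff_getElem.1 h2 i j (by omega) (by omega) hij
      exact Nat.sub_le_sub_right this 1

theorem card_fillingLists_succ (n : ℕ) : (fillingLists (n + 1)).card =
    (fillingLists n).card + (initialLists (n + 1)).card := by
  have h : fillingLists (n + 1) =
      (fillingLists n).image ((n + 2) :: ·) ∪ initialLists (n + 1) := by
    ext l
    simp only [mem_fillingLists_succ, Finset.mem_union, Finset.mem_image, eq_comm]
  rw [h, Finset.card_union_of_disjoint, Finset.card_image_of_injective _ (List.cons_injective)]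
  rw [Finset.disjoint_left]
  intro l hl hl'
  obtain ⟨t, -, rfl⟩ := Finset.mem_image.1 hl
  have := ((initialLists_props hl').2.2 (n + 2) List.mem_cons_self).2
  omega

theorem card_initialLists_add_three (n : ℕ) : (initialLists (n + 3)).card =
    (fillingLists (n + 2)).card + (fillingLists n).card := by
  rw [initialLists, Finset.card_union_of_disjoint,
    Finset.card_image_of_injective _ (List.cons_injective), Finset.card_image_of_injective]
  · intro s t h
    simpa using h
  · rw [Finset.disjoint_left]
    intro l hl hl'
    obtain ⟨t, -, rfl⟩ := Finset.mem_image.1 hl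
    obtain ⟨s, -, hs⟩ := Finset.mem_image.1 hl'
    simp at hs

theorem card_VPFdown_succ (n : ℕ) : (VPFdown (n + 1)).card = (initialLists (n + 1)).card := by
  rw [← image_prefList_VPFdown, Finset.card_image_of_injective _ prefList_injective]

theorem card_VPFdown_add_four (n : ℕ) :
    (VPFdown (n + 4)).card = 2 * (VPFdown (n + 3)).card + (VPFdown (n + 1)).card := by
  have h1 := card_initialLists_add_three (n + 1)
  have h2 := card_initialLists_add_three n
  have h3 := card_fillingLists_succ (n + 2)
  have h4 := card_fillingLists_succ n
  rw [card_VPFdown_succ (n + 3), card_VPFdown_succ (n + 2), card_VPFdown_succ n]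
  simp only [Nat.add_assoc, Nat.reduceAdd] at *
  omega

/-- Lagrange interpolation: the leading coefficient of `a x² + b x + c` from its values at the
roots of `x³ + 2x − 1`. -/
theorem sum_quadratic_div_derivative {ρ₁ ρ₂ ρ₃ : ℂ}
    (h₁ : ρ₁ ^ 3 + 2 * ρ₁ - 1 = 0) (h₂ : ρ₂ ^ 3 + 2 * ρ₂ - 1 = 0)
    (h₃ : ρ₃ ^ 3 + 2 * ρ₃ - 1 = 0)
    (h₁₂ : ρ₁ ≠ ρ₂) (h₁₃ : ρ₁ ≠ ρ₃) (h₂₃ : ρ₂ ≠ ρ₃) (a b c : ℂ) :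
    (a * ρ₁ ^ 2 + b * ρ₁ + c) / (3 * ρ₁ ^ 2 + 2) + (a * ρ₂ ^ 2 + b * ρ₂ + c) / (3 * ρ₂ ^ 2 + 2) +
      (a * ρ₃ ^ 2 + b * ρ₃ + c) / (3 * ρ₃ ^ 2 + 2) = a := by
  have d₁₂ := sub_ne_zero.2 h₁₂
  have d₁₃ := sub_ne_zero.2 h₁₃
  have d₂₃ := sub_ne_zero.2 h₂₃
  have q₁₂ : ρ₁ ^ 2 + ρ₁ * ρ₂ + ρ₂ ^ 2 + 2 = 0 :=
    mul_left_cancel₀ d₁₂ (by linear_combination h₁ - h₂)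
  have q₁₃ : ρ₁ ^ 2 + ρ₁ * ρ₃ + ρ₃ ^ 2 + 2 = 0 :=
    mul_left_cancel₀ d₁₃ (by linear_combination h₁ - h₃)
  have hsum : ρ₁ + ρ₂ + ρ₃ = 0 :=
    mul_left_cancel₀ d₂₃ (by linear_combination q₁₂ - q₁₃)
  obtain rfl : ρ₃ = -ρ₁ - ρ₂ := by linear_combination hsum
  have e₁ : 3 * ρ₁ ^ 2 + 2 = (ρ₁ - ρ₂) * (ρ₁ - (-ρ₁ - ρ₂)) := by linear_combination q₁₂
  have e₂ : 3 * ρ₂ ^ 2 + 2 = -((ρ₁ - ρ₂) * (ρ₂ - (-ρ₁ - ρ₂))) := by linear_combination q₁₂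
  have e₃ : 3 * (-ρ₁ - ρ₂) ^ 2 + 2 = (ρ₁ - (-ρ₁ - ρ₂)) * (ρ₂ - (-ρ₁ - ρ₂)) := by
    linear_combination q₁₂
  rw [e₁, e₂, e₃]
  field_simp
  ring

theorem zpow_neg_add_three {ρ : ℂ} (h : ρ ^ 3 + 2 * ρ - 1 = 0) (k : ℤ) :
    ρ ^ (-(k + 3)) = 2 * ρ ^ (-(k + 2)) + ρ ^ (-k) := by
  have h0 : ρ ≠ 0 := by rintro rfl; norm_num at h
  rw [show -(k + 2) = -(k + 3) + 1 by ring, show -k = -(k + 3) + (3 : ℕ) by push_cast; ring,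
    zpow_add_one₀ h0, zpow_add₀ h0, zpow_natCast]
  linear_combination -ρ ^ (-(k + 3)) * h

theorem residue_mul_zpow {ρ : ℂ} (h : ρ ^ 3 + 2 * ρ - 1 = 0) :
    (ρ ^ 2 + ρ) / (3 * ρ ^ 2 + 2) * ρ ^ (-2 : ℤ) = (1 * ρ ^ 2 + 0 * ρ + 3) / (3 * ρ ^ 2 + 2) ∧
    (ρ ^ 2 + ρ) / (3 * ρ ^ 2 + 2) * ρ ^ (-3 : ℤ) = (3 * ρ ^ 2 + 1 * ρ + 6) / (3 * ρ ^ 2 + 2) ∧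
    (ρ ^ 2 + ρ) / (3 * ρ ^ 2 + 2) * ρ ^ (-4 : ℤ) =
      (6 * ρ ^ 2 + 3 * ρ + 13) / (3 * ρ ^ 2 + 2) := by
  have h0 : ρ ≠ 0 := by rintro rfl; norm_num at h
  have key : ∀ (k : ℕ) (y : ℂ), ρ ^ 2 + ρ = y * ρ ^ k →
      (ρ ^ 2 + ρ) / (3 * ρ ^ 2 + 2) * ρ ^ (-(k : ℤ)) = y / (3 * ρ ^ 2 + 2) := by
    intro k y hy
    rw [hy, zpow_neg, zpow_natCast]
    field_simp
  refine ⟨key 2 _ ?_, key 3 _ ?_, key 4 _ ?_⟩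
  · linear_combination -ρ * h
  · linear_combination (-3 * ρ ^ 2 - ρ) * h
  · linear_combination (-6 * ρ ^ 3 - 3 * ρ ^ 2 - ρ) * h

/-- If `ρ₁, ρ₂, ρ₃ ∈ ℂ` are the three distinct complex roots of
`x³ + 2x − 1`, then for every `n ≥ 1`,
`|VPF_n^↓| = ∑_{j=1}^{3} ((ρⱼ² + ρⱼ)/(3ρⱼ² + 2))·ρⱼ^{−(n+1)}`. -/
theorem vpfdown_card_closed_form (ρ₁ ρ₂ ρ₃ : ℂ)
    (h₁ : ρ₁ ^ 3 + 2 * ρ₁ - 1 = 0) (h₂ : ρ₂ ^ 3 + 2 * ρ₂ - 1 = 0)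
    (h₃ : ρ₃ ^ 3 + 2 * ρ₃ - 1 = 0)
    (h₁₂ : ρ₁ ≠ ρ₂) (h₁₃ : ρ₁ ≠ ρ₃) (h₂₃ : ρ₂ ≠ ρ₃)
    (n : ℕ) (hn : 1 ≤ n) :
    ((VPFdown n).card : ℂ) =
      (ρ₁ ^ 2 + ρ₁) / (3 * ρ₁ ^ 2 + 2) * ρ₁ ^ (-((n : ℤ) + 1)) +
        (ρ₂ ^ 2 + ρ₂) / (3 * ρ₂ ^ 2 + 2) * ρ₂ ^ (-((n : ℤ) + 1)) +
        (ρ₃ ^ 2 + ρ₃) / (3 * ρ₃ ^ 2 + 2) * ρ₃ ^ (-((n : ℤ) + 1)) := by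
  have lag := sum_quadratic_div_derivative h₁ h₂ h₃ h₁₂ h₁₃ h₂₃
  obtain ⟨a₁, b₁, c₁⟩ := residue_mul_zpow h₁
  obtain ⟨a₂, b₂, c₂⟩ := residue_mul_zpow h₂
  obtain ⟨a₃, b₃, c₃⟩ := residue_mul_zpow h₃
  induction n using Nat.strong_induction_on with
  | _ n ih =>
    match n, hn with
    | 1, _ =>
      have hcard : (VPFdown 1).card = 1 := by rw [card_VPFdown_succ]; rfl
      norm_num only [hcard, Nat.cast_one]
      rw [a₁, a₂, a₃, lag]
    | 2, _ =>
      have hcard : (VPFdown 2).card = 3 := by rw [card_VPFdown_succ]; rfl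
      norm_num only [hcard, Nat.cast_ofNat]
      rw [b₁, b₂, b₃, lag]
    | 3, _ =>
      have hcard : (VPFdown 3).card = 6 := by
        rw [card_VPFdown_succ, card_initialLists_add_three]; rfl
      norm_num only [hcard, Nat.cast_ofNat]
      rw [c₁, c₂, c₃, lag]
    | n + 4, _ =>
      have i₃ := ih (n + 3) (by omega) (by omega)
      have i₁ := ih (n + 1) (by omega) (by omega)
      rw [card_VPFdown_add_four]
      push_cast at i₁ i₃ ⊢
      rw [i₁, i₃]
      have z₁ := zpow_neg_add_three h₁ ((n : ℤ) + 1 + 1)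
      have z₂ := zpow_neg_add_three h₂ ((n : ℤ) + 1 + 1)
      have z₃ := zpow_neg_add_three h₃ ((n : ℤ) + 1 + 1)
      rw [show (n : ℤ) + 1 + 1 + 3 = n + 4 + 1 by ring,
        show (n : ℤ) + 1 + 1 + 2 = n + 3 + 1 by ring] at z₁ z₂ z₃
      rw [z₁, z₂, z₃]
      ring
end
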